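/- For every ρ ∈ [0,1], every λ > 0 and all real numbers 0 ≤ t₁ ≤ t₂, one has ∫_{t₁}^{t₂} λ^ρ e^{−2λ(t₂−r)} dr ≤ (t₂ − t₁)^{1−ρ}. -/

import Mathlib

/-!
Write `d = t₂ - t₁` and `J = ∫ r in t₁..t₂, exp (-2l(t₂-r)) = (1 - exp (-2ld)) / (2l)`.
Then `l * J ≤ 1` and, since `1 - x ≤ exp (-x)`, also `0 ≤ J ≤ d`. The claim follows by
interpolating between these two bounds: `l ^ ρ * J = (l * J) ^ ρ * J ^ (1 - ρ) ≤ d ^ (1 - ρ)`.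
-/

/-- Scalar core of Lemma 2.2, inequality (9): for `ρ ∈ [0,1]`, `λ > 0`, `0 ≤ t₁ ≤ t₂`,
`∫_{t₁}^{t₂} λ^ρ e^{-2λ(t₂-r)} dr ≤ (t₂-t₁)^{1-ρ}`. -/
theorem scalar_integral_estimate_rho (ρ : ℝ) (hρ0 : 0 ≤ ρ) (hρ1 : ρ ≤ 1)
    (l : ℝ) (hl : 0 < l) (t₁ t₂ : ℝ) (ht₁ : 0 ≤ t₁) (ht : t₁ ≤ t₂) :
    ∫ r in t₁..t₂, l ^ ρ * Real.exp (-(2 * l * (t₂ - r))) ≤ (t₂ - t₁) ^ (1 - ρ) := by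
  rw [intervalIntegral.integral_const_mul]
  have hJ : ∫ r in t₁..t₂, Real.exp (-(2 * l * (t₂ - r)))
      = (1 - Real.exp (-(2 * l * (t₂ - t₁)))) / (2 * l) := by
    have hderiv : ∀ r ∈ Set.uIcc t₁ t₂,
        HasDerivAt (fun r => Real.exp (-(2 * l * (t₂ - r))) / (2 * l))
          (Real.exp (-(2 * l * (t₂ - r)))) r := by
      intro r _
      have h := ((((hasDerivAt_id r).const_sub t₂).const_mul (2 * l)).neg.exp).div_const (2 * l)
      refine h.congr_deriv ?_
      simp only [id, Pi.neg_apply]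
      field_simp
    rw [intervalIntegral.integral_eq_sub_of_hasDerivAt hderiv
      (Continuous.intervalIntegrable (by fun_prop) _ _)]
    simp
    ring
  have hJ0 : 0 ≤ ∫ r in t₁..t₂, Real.exp (-(2 * l * (t₂ - r))) :=
    intervalIntegral.integral_nonneg ht fun r _ => (Real.exp_pos _).le
  generalize (∫ r in t₁..t₂, Real.exp (-(2 * l * (t₂ - r)))) = J at hJ hJ0 ⊢
  have hJd : J ≤ t₂ - t₁ := by
    rw [hJ, div_le_iff₀ (by positivity)]
    linarith [Real.add_one_le_exp (-(2 * l * (t₂ - t₁)))]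
  have hlJ : l * J ≤ 1 := by
    have h2 : J * (2 * l) = 1 - Real.exp (-(2 * l * (t₂ - t₁))) := by
      rw [hJ]; field_simp
    linarith [Real.exp_pos (-(2 * l * (t₂ - t₁)))]
  calc l ^ ρ * J = l ^ ρ * (J ^ ρ * J ^ (1 - ρ)) := by
        -- nonnegative exponents, so that the splitting also holds for `J = 0`
        rw [← Real.rpow_add_of_nonneg hJ0 hρ0 (sub_nonneg.2 hρ1), add_sub_cancel, Real.rpow_one]
    _ = (l * J) ^ ρ * J ^ (1 - ρ) := by rw [Real.mul_rpow hl.le hJ0, mul_assoc]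
    _ ≤ 1 * (t₂ - t₁) ^ (1 - ρ) :=
        mul_le_mul (Real.rpow_le_one (by positivity) hlJ hρ0)
          (Real.rpow_le_rpow hJ0 hJd (sub_nonneg.2 hρ1)) (by positivity) zero_le_one
    _ = (t₂ - t₁) ^ (1 - ρ) := one_mul _
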